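/- Let M be a locally connected topological space and ≪ a transitive binary relation on M whose graph is open in M × M and which is future-dense and past-dense. Let (P_k)_{k∈ℕ} be a sequence of past sets (I⁻(P_k) = P_k) whose Hausdorff closed limit Π_∞ exists, and set F_k := M \ closure(P_k). Then the sequence (F_k) has a Hausdorff closed limit Φ_∞; setting P_∞ := interior(Π_∞), F_∞ := interior(Φ_∞) and A_∞ := ∂Π_∞, one has F_∞ = M \ Π_∞, P_∞ is a past set, F_∞ is a future set (I⁺(F_∞) = F_∞), M is the disjoint union of P_∞, A_∞ and F_∞, and ∂P_∞ = A_∞ = ∂F_∞. -/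

import Mathlib

/-!
Let `Π` be the limit of the sets `P k`. If `x ≪ y ∈ Π`, the neighbourhood `I⁺(x)` of `y` meets
`P k` for all large `k`, so `x ∈ P k` for all large `k`. Hence `I⁻(Π)` is an open subset of `Π`,
dense in `Π` by past-density, and the closed set `Π` is the closure of its interior.

The complements of the closures converge to `(interior Π)ᶜ`. A point outside `Π` has a
neighbourhood that misses `P k` for all large `k`, so it lies in the lower limit, which is closed.
A point `x` of `interior Π` satisfies `x ≪ y ≪ z` for some `y` and some `z ∈ Π` by
future-density; then `y ∈ P k` for all large `k`, and the neighbourhood `I⁻(y)` of `x` is contained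
in each of these `P k`, so `x` is not in the upper limit.
-/

/-- The Hausdorff upper limit of a sequence of subsets. -/
def hausdorffUpperLimit {M : Type*} [TopologicalSpace M] (S : ℕ → Set M) : Set M :=
  {p | ∀ U ∈ nhds p, {k : ℕ | (U ∩ S k).Nonempty}.Infinite}

/-- The Hausdorff lower limit of a sequence of subsets. -/
def hausdorffLowerLimit {M : Type*} [TopologicalSpace M] (S : ℕ → Set M) : Set M :=
  {p | ∀ U ∈ nhds p, {k : ℕ | ¬ (U ∩ S k).Nonempty}.Finite}

/-- The timelike past of a set `S`: all points related to some point of `S`. -/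
def Iminus {M : Type*} (r : M → M → Prop) (S : Set M) : Set M :=
  {x | ∃ s ∈ S, r x s}

/-- The timelike future of a set `S`: all points to which some point of `S` is related. -/
def Iplus {M : Type*} (r : M → M → Prop) (S : Set M) : Set M :=
  {y | ∃ s ∈ S, r s y}

open Filter Topology

section Limits

variable {M : Type*} [TopologicalSpace M] {S : ℕ → Set M} {p : M}

theorem mem_hausdorffUpperLimit_iff :
    p ∈ hausdorffUpperLimit S ↔ ∀ U ∈ 𝓝 p, ∃ᶠ k in atTop, (U ∩ S k).Nonempty := by
  simp only [hausdorffUpperLimit, Set.mem_ofPred_eq, Nat.frequently_atTop_iff_infinite]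

theorem mem_hausdorffLowerLimit_iff :
    p ∈ hausdorffLowerLimit S ↔ ∀ U ∈ 𝓝 p, ∀ᶠ k in atTop, (U ∩ S k).Nonempty := by
  simp only [hausdorffLowerLimit, Set.mem_ofPred_eq, ← Nat.cofinite_eq_atTop, eventually_cofinite]

theorem notMem_hausdorffUpperLimit_iff :
    p ∉ hausdorffUpperLimit S ↔ ∃ U ∈ 𝓝 p, ∀ᶠ k in atTop, Disjoint U (S k) := by
  simp only [mem_hausdorffUpperLimit_iff, not_forall, not_frequently, exists_prop,
    Set.disjoint_iff_inter_eq_empty, Set.not_nonempty_iff_eq_empty]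

theorem mem_hausdorffLowerLimit_of_eventually_mem (h : ∀ᶠ k in atTop, p ∈ S k) :
    p ∈ hausdorffLowerLimit S :=
  mem_hausdorffLowerLimit_iff.2 fun _ hU => h.mono fun _ hk => ⟨p, mem_of_mem_nhds hU, hk⟩

theorem hausdorffLowerLimit_subset_hausdorffUpperLimit (S : ℕ → Set M) :
    hausdorffLowerLimit S ⊆ hausdorffUpperLimit S := fun _ hp =>
  mem_hausdorffUpperLimit_iff.2 fun U hU => (mem_hausdorffLowerLimit_iff.1 hp U hU).frequently

theorem isClosed_hausdorffLowerLimit (S : ℕ → Set M) : IsClosed (hausdorffLowerLimit S) := by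
  refine isClosed_of_closure_subset fun p hp => mem_hausdorffLowerLimit_iff.2 fun U hU => ?_
  obtain ⟨q, hqU, hq⟩ := mem_closure_iff_nhds.1 hp _ (interior_mem_nhds.2 hU)
  exact mem_hausdorffLowerLimit_iff.1 hq U (mem_interior_iff_mem_nhds.1 hqU)

theorem compl_hausdorffUpperLimit_subset_hausdorffLowerLimit (S : ℕ → Set M) :
    (hausdorffUpperLimit S)ᶜ ⊆ hausdorffLowerLimit fun k => (closure (S k))ᶜ := by
  intro x hx
  obtain ⟨U, hU, hdisj⟩ := notMem_hausdorffUpperLimit_iff.1 hx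
  refine mem_hausdorffLowerLimit_of_eventually_mem (hdisj.mono fun k hk hxk => ?_)
  obtain ⟨z, hzU, hzS⟩ := mem_closure_iff_nhds.1 hxk U hU
  exact hk.notMem_of_mem_left hzU hzS

end Limits

section Relation

variable {M : Type*} {r : M → M → Prop} {S : Set M}

theorem Iplus_compl_subset_compl (hS : Iminus r S ⊆ S) : Iplus r Sᶜ ⊆ Sᶜ := by
  rintro y ⟨x, hx, hxy⟩ hy
  exact hx (hS ⟨y, hy, hxy⟩)

variable [TopologicalSpace M]

theorem isOpen_Iminus (hpast : ∀ y, IsOpen {x | r x y}) (S : Set M) : IsOpen (Iminus r S) := by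
  have hunion : Iminus r S = ⋃ s ∈ S, {x | r x s} := by
    ext x
    simp [Iminus]
  exact hunion ▸ isOpen_biUnion fun s _ => hpast s

theorem Iminus_subset_interior (hpast : ∀ y, IsOpen {x | r x y}) (hS : Iminus r S ⊆ S) :
    Iminus r S ⊆ interior S :=
  interior_maximal hS (isOpen_Iminus hpast S)

theorem subset_Iminus_of_isOpen (hfd : ∀ x, x ∈ closure {y | r x y}) (hS : IsOpen S) :
    S ⊆ Iminus r S := fun x hx => mem_closure_iff.1 (hfd x) S hS hx

theorem subset_Iplus_of_isOpen (hpd : ∀ x, x ∈ closure {y | r y x}) (hS : IsOpen S) :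
    S ⊆ Iplus r S := fun x hx => mem_closure_iff.1 (hpd x) S hS hx

theorem Iminus_interior_eq (hpast : ∀ y, IsOpen {x | r x y})
    (hfd : ∀ x, x ∈ closure {y | r x y}) (hS : Iminus r S ⊆ S) :
    Iminus r (interior S) = interior S := by
  refine Set.Subset.antisymm ?_ (subset_Iminus_of_isOpen hfd isOpen_interior)
  rintro x ⟨y, hy, hxy⟩
  exact Iminus_subset_interior hpast hS ⟨y, interior_subset hy, hxy⟩

theorem Iplus_compl_eq (hpd : ∀ x, x ∈ closure {y | r y x}) (hclosed : IsClosed S)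
    (hS : Iminus r S ⊆ S) : Iplus r Sᶜ = Sᶜ :=
  (Iplus_compl_subset_compl hS).antisymm (subset_Iplus_of_isOpen hpd hclosed.isOpen_compl)

theorem closure_interior_eq_of_Iminus_subset (hpast : ∀ y, IsOpen {x | r x y})
    (hpd : ∀ x, x ∈ closure {y | r y x}) (hclosed : IsClosed S) (hS : Iminus r S ⊆ S) :
    closure (interior S) = S := by
  refine (closure_minimal interior_subset hclosed).antisymm fun x hx => ?_
  exact closure_mono (fun y hyx => Iminus_subset_interior hpast hS ⟨x, hx, hyx⟩) (hpd x)

variable {P : ℕ → Set M}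

theorem eventually_mem_of_mem_Iminus_hausdorffLowerLimit (hfut : ∀ x, IsOpen {y | r x y})
    (hP : ∀ k, Iminus r (P k) ⊆ P k) {x : M} (hx : x ∈ Iminus r (hausdorffLowerLimit P)) :
    ∀ᶠ k in atTop, x ∈ P k := by
  obtain ⟨y, hy, hxy⟩ := hx
  filter_upwards [mem_hausdorffLowerLimit_iff.1 hy _ ((hfut x).mem_nhds hxy)]
    with k ⟨z, hxz, hz⟩
  exact hP k ⟨z, hz, hxz⟩

theorem Iminus_hausdorffLowerLimit_subset (hfut : ∀ x, IsOpen {y | r x y})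
    (hP : ∀ k, Iminus r (P k) ⊆ P k) :
    Iminus r (hausdorffLowerLimit P) ⊆ hausdorffLowerLimit P := fun _ hx =>
  mem_hausdorffLowerLimit_of_eventually_mem
    (eventually_mem_of_mem_Iminus_hausdorffLowerLimit hfut hP hx)

theorem hausdorffUpperLimit_compl_closure_subset (hfut : ∀ x, IsOpen {y | r x y})
    (hpast : ∀ y, IsOpen {x | r x y}) (hfd : ∀ x, x ∈ closure {y | r x y})
    (hP : ∀ k, Iminus r (P k) ⊆ P k) :
    (hausdorffUpperLimit fun k => (closure (P k))ᶜ) ⊆ (interior (hausdorffLowerLimit P))ᶜ := by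
  refine Set.subset_compl_comm.1 fun x hx => notMem_hausdorffUpperLimit_iff.2 ?_
  obtain ⟨y, hy, hxy⟩ := subset_Iminus_of_isOpen hfd isOpen_interior hx
  obtain ⟨z, hz, hyz⟩ := subset_Iminus_of_isOpen hfd isOpen_interior hy
  have hyP : ∀ᶠ k in atTop, y ∈ P k :=
    eventually_mem_of_mem_Iminus_hausdorffLowerLimit hfut hP ⟨z, interior_subset hz, hyz⟩
  refine ⟨{w | r w y}, (hpast y).mem_nhds hxy, hyP.mono fun k hk => ?_⟩
  have hpastP : {w | r w y} ⊆ P k := fun w hwy => hP k ⟨y, hk, hwy⟩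
  exact Set.disjoint_compl_right_iff_subset.2 (hpastP.trans subset_closure)

theorem hausdorffLimit_compl_closure_eq (hfut : ∀ x, IsOpen {y | r x y})
    (hpast : ∀ y, IsOpen {x | r x y}) (hfd : ∀ x, x ∈ closure {y | r x y})
    (hP : ∀ k, Iminus r (P k) ⊆ P k) (hlim : hausdorffUpperLimit P = hausdorffLowerLimit P) :
    (hausdorffUpperLimit fun k => (closure (P k))ᶜ) = (interior (hausdorffLowerLimit P))ᶜ ∧
      (hausdorffLowerLimit fun k => (closure (P k))ᶜ) = (interior (hausdorffLowerLimit P))ᶜ := by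
  have hupper := hausdorffUpperLimit_compl_closure_subset hfut hpast hfd hP
  have hlower : (interior (hausdorffLowerLimit P))ᶜ ⊆
      hausdorffLowerLimit fun k => (closure (P k))ᶜ := by
    rw [← closure_compl, ← hlim]
    exact closure_minimal (compl_hausdorffUpperLimit_subset_hausdorffLowerLimit P)
      (isClosed_hausdorffLowerLimit _)
  have hle := hausdorffLowerLimit_subset_hausdorffUpperLimit fun k => (closure (P k))ᶜ
  exact ⟨hupper.antisymm (hlower.trans hle), (hle.trans hupper).antisymm hlower⟩

theorem hausdorffLimit_pasts_futures_general
    (hfut : ∀ x, IsOpen {y | r x y}) (hpast : ∀ y, IsOpen {x | r x y})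
    (hfd : ∀ x, x ∈ closure {y | r x y}) (hpd : ∀ x, x ∈ closure {y | r y x})
    (hP : ∀ k, Iminus r (P k) ⊆ P k) {PiInf : Set M}
    (hup : hausdorffUpperLimit P = PiInf) (hlow : hausdorffLowerLimit P = PiInf)
    {F : ℕ → Set M} (hF : ∀ k, F k = (closure (P k))ᶜ) :
    ∃ PhiInf : Set M,
      hausdorffUpperLimit F = PhiInf ∧ hausdorffLowerLimit F = PhiInf ∧
      interior PhiInf = PiInfᶜ ∧
      Iminus r (interior PiInf) = interior PiInf ∧
      Iplus r (interior PhiInf) = interior PhiInf ∧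
      interior PiInf ∪ frontier PiInf ∪ interior PhiInf = Set.univ ∧
      Disjoint (interior PiInf) (frontier PiInf) ∧
      Disjoint (interior PiInf) (interior PhiInf) ∧
      Disjoint (frontier PiInf) (interior PhiInf) ∧
      frontier (interior PiInf) = frontier PiInf ∧
      frontier (interior PhiInf) = frontier PiInf := by
  obtain rfl : F = fun k => (closure (P k))ᶜ := funext hF
  subst hlow
  obtain ⟨hFup, hFlow⟩ := hausdorffLimit_compl_closure_eq hfut hpast hfd hP hup
  have hclosed := isClosed_hausdorffLowerLimit P
  have hinv := Iminus_hausdorffLowerLimit_subset hfut hP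
  have hregular := closure_interior_eq_of_Iminus_subset hpast hpd hclosed hinv
  have hint : interior (interior (hausdorffLowerLimit P))ᶜ = (hausdorffLowerLimit P)ᶜ := by
    rw [interior_compl, hregular]
  refine ⟨_, hFup, hFlow, hint, Iminus_interior_eq hpast hfd hinv, ?_⟩
  rw [hint]
  refine ⟨Iplus_compl_eq hpd hclosed hinv, ?_, disjoint_interior_frontier,
    Set.disjoint_compl_right_iff_subset.2 interior_subset,
    Set.disjoint_compl_right_iff_subset.2 hclosed.frontier_subset, ?_, frontier_compl _⟩
  · rw [← closure_eq_interior_union_frontier, hclosed.closure_eq, Set.union_compl_self]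
  · rw [frontier, hregular, interior_interior, hclosed.frontier_eq]

end Relation

theorem hausdorffLimit_pasts_futures {M : Type*} [TopologicalSpace M]
    [LocallyConnectedSpace M]
    (r : M → M → Prop)
    (htrans : Transitive r)
    (hopen : IsOpen {p : M × M | r p.1 p.2})
    (hfd : ∀ x : M, x ∈ closure {y | r x y})
    (hpd : ∀ x : M, x ∈ closure {y | r y x})
    (P : ℕ → Set M) (hP : ∀ k, Iminus r (P k) = P k)
    (PiInf : Set M)
    (hup : hausdorffUpperLimit P = PiInf) (hlow : hausdorffLowerLimit P = PiInf)
    (F : ℕ → Set M) (hF : ∀ k, F k = (closure (P k))ᶜ) :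
    ∃ PhiInf : Set M,
      hausdorffUpperLimit F = PhiInf ∧ hausdorffLowerLimit F = PhiInf ∧
      interior PhiInf = PiInfᶜ ∧
      Iminus r (interior PiInf) = interior PiInf ∧
      Iplus r (interior PhiInf) = interior PhiInf ∧
      interior PiInf ∪ frontier PiInf ∪ interior PhiInf = Set.univ ∧
      Disjoint (interior PiInf) (frontier PiInf) ∧
      Disjoint (interior PiInf) (interior PhiInf) ∧
      Disjoint (frontier PiInf) (interior PhiInf) ∧
      frontier (interior PiInf) = frontier PiInf ∧
      frontier (interior PhiInf) = frontier PiInf :=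
  hausdorffLimit_pasts_futures_general (fun x => hopen.preimage (Continuous.prodMk_right x))
    (fun y => hopen.preimage (Continuous.prodMk_left y)) hfd hpd
    (fun k => (hP k).subset) hup hlow hF
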